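/- For every n≥1, ∑_{m=0}^{n−1} 2^{n−m} · Z_n(m) = (n+1) · C_n. -/

import Mathlib

/-- The set 𝔗ₙ, encoded as lists of pairs `(i_j, k_j)`:
entries satisfy `1 ≤ i_j - k_j` (i.e. `k_j < i_j`) and `i_j ≤ n-1` (i.e. `i_j + 1 ≤ n`),
the `i_j` are strictly increasing, and the `i_j - k_j` are strictly increasing. -/
def IsTT (n : ℕ) (l : List (ℕ × ℕ)) : Prop :=
  (∀ p ∈ l, p.2 < p.1 ∧ p.1 + 1 ≤ n) ∧
  List.Chain' (· < ·) (l.map Prod.fst) ∧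
  List.Chain' (· < ·) (l.map (fun p => p.1 - p.2))

/-- The set of integers covered by the intervals `[i_j - k_j, i_j]`. -/
def cov (l : List (ℕ × ℕ)) : Finset ℕ :=
  l.foldr (fun p s => Finset.Icc (p.1 - p.2) p.1 ∪ s) ∅

/-- The weight of an element of 𝔗ₙ. -/
def wt (l : List (ℕ × ℕ)) : ℕ := (cov l).card

/-- `Z n m` is the number of elements of 𝔗ₙ of weight `m`. -/
noncomputable def Z (n m : ℕ) : ℕ :=
  Nat.card {l : List (ℕ × ℕ) // IsTT n l ∧ wt l = m}

/-!
An element of 𝔗ₙ never covers `0`, so `n - m` is the number of points of `{0, …, n - 1}` missed by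
the intervals of an element of weight `m`, and the theorem counts every element with multiplicity
`2` to that number. More generally, let `W(a, b, u)` be the count, with multiplicity `2` to the
number of missed points of `[b, b + u)`, of the lists whose intervals start at `a` or later and end
in `[b, b + u)`. Deciding whether an interval ends at `b` gives the recursion
`W(a, b, u + 1) = W(a, b + 1, u) + W(b + 1, b + 1, u) + ∑_{k ≤ b - a} W(b - k + 1, b + 1, u)`,
where the second term accounts for the lists missing `b`, which count twice. Only `d = b + 1 - a`
and `u` matter, and by the hockey-stick identity the solution is the binomial coefficient
`(2u + d).choose u`. The theorem is the case `a = 1`, `b = 0`, `u = n`.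
-/

open Finset

theorem choose_add_sum_range_choose (m k d : ℕ) :
    m.choose (k + 1) + ∑ j ∈ range d, (m + j).choose k = (m + d).choose (k + 1) := by
  induction d with
  | zero => simp
  | succ d ih => rw [sum_range_succ, ← add_assoc, ih, ← add_assoc, Nat.choose_succ_succ', add_comm]

theorem choose_two_mul_succ_add (u d : ℕ) :
    (2 * (u + 1) + d).choose (u + 1) =
      (2 * u + 1).choose u + ∑ j ∈ range (d + 1), (2 * u + (j + 1)).choose u := by
  calc (2 * (u + 1) + d).choose (u + 1)
      = (2 * u + 1 + (d + 1)).choose (u + 1) := by congr 1; ring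
    _ = (2 * u + 1).choose (u + 1) + ∑ j ∈ range (d + 1), (2 * u + 1 + j).choose u :=
        (choose_add_sum_range_choose ..).symm
    _ = _ := by simp only [Nat.choose_symm_half, add_assoc, add_comm 1]

theorem cov_cons (i k : ℕ) (l : List (ℕ × ℕ)) : cov ((i, k) :: l) = Icc (i - k) i ∪ cov l := rfl

theorem mem_cov {l : List (ℕ × ℕ)} {x : ℕ} :
    x ∈ cov l ↔ ∃ p ∈ l, p.1 - p.2 ≤ x ∧ x ≤ p.1 := by
  induction l with
  | nil => simp [cov]
  | cons p l ih =>
    obtain ⟨i, k⟩ := p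
    simp only [cov_cons, mem_union, mem_Icc, ih, List.exists_mem_cons_iff]

/-- The lists of pairs `(i, k)`, encoding intervals `[i - k, i]` of natural numbers, such that the
left ends are at least `a` and strictly increasing, and the right ends are in `[b, N)` and strictly
increasing. The condition `k ≤ i` keeps the subtraction from truncating. -/
structure IsIntervalList (a b N : ℕ) (l : List (ℕ × ℕ)) : Prop where
  bounds : ∀ p ∈ l, p.2 ≤ p.1 ∧ a ≤ p.1 - p.2 ∧ b ≤ p.1 ∧ p.1 < N
  pairwise : l.Pairwise fun p q => p.1 < q.1 ∧ p.1 - p.2 < q.1 - q.2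

theorem isTT_iff_isIntervalList {n : ℕ} {l : List (ℕ × ℕ)} : IsTT n l ↔ IsIntervalList 1 0 n l := by
  have hbounds (p : ℕ × ℕ) :
      (p.2 < p.1 ∧ p.1 + 1 ≤ n) ↔ p.2 ≤ p.1 ∧ 1 ≤ p.1 - p.2 ∧ 0 ≤ p.1 ∧ p.1 < n := by omega
  have hpairwise : List.IsChain (· < ·) (l.map Prod.fst) ∧
      List.IsChain (· < ·) (l.map fun p => p.1 - p.2) ↔
        l.Pairwise fun p q => p.1 < q.1 ∧ p.1 - p.2 < q.1 - q.2 := by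
    simp only [List.isChain_iff_pairwise, List.pairwise_map, List.pairwise_and_iff]
  exact (and_congr (forall₂_congr fun p _ => hbounds p) hpairwise).trans
    ⟨fun h => ⟨h.1, h.2⟩, fun h => ⟨h.1, h.2⟩⟩

namespace IsIntervalList

variable {a b N : ℕ} {l : List (ℕ × ℕ)}

protected theorem nil (a b N : ℕ) : IsIntervalList a b N [] :=
  ⟨by simp, List.Pairwise.nil⟩

theorem cons_iff {i k : ℕ} :
    IsIntervalList a b N ((i, k) :: l) ↔
      (a + k ≤ i ∧ b ≤ i ∧ i < N) ∧ IsIntervalList (i + 1 - k) (i + 1) N l := by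
  constructor
  · rintro ⟨hbounds, hpairwise⟩
    simp only [List.forall_mem_cons, List.pairwise_cons] at hbounds hpairwise
    refine ⟨by omega, fun p hp => ?_, hpairwise.2⟩
    have := hbounds.2 p hp
    have := hpairwise.1 p hp
    omega
  · rintro ⟨hik, hbounds, hpairwise⟩
    refine ⟨List.forall_mem_cons.2 ⟨by omega, fun p hp => ?_⟩,
      List.pairwise_cons.2 ⟨fun p hp => ?_, hpairwise⟩⟩
    all_goals
      have := hbounds p hp
      omega

theorem iff_add_one_or_exists_cons (hb : b < N) :
    IsIntervalList a b N l ↔ IsIntervalList a (b + 1) N l ∨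
      ∃ k, a + k ≤ b ∧ ∃ l', IsIntervalList (b + 1 - k) (b + 1) N l' ∧ (b, k) :: l' = l := by
  rcases l with _ | ⟨⟨i, k⟩, l⟩
  · simp [IsIntervalList.nil]
  · simp only [cons_iff, List.cons.injEq, Prod.mk.injEq]
    constructor
    · rintro ⟨hik, hl⟩
      rcases eq_or_ne b i with rfl | hbi
      · exact Or.inr ⟨k, hik.1, l, hl, ⟨rfl, rfl⟩, rfl⟩
      · exact Or.inl ⟨by omega, hl⟩
    · rintro (⟨hik, hl⟩ | ⟨k, hk, l, hl, ⟨rfl, rfl⟩, rfl⟩)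
      · exact ⟨by omega, hl⟩
      · exact ⟨by omega, hl⟩

theorem cov_subset (hl : IsIntervalList a b N l) : cov l ⊆ Ico a N := by
  intro x hx
  obtain ⟨p, hp, hpx⟩ := mem_cov.1 hx
  have := hl.bounds p hp
  rw [mem_Ico]
  omega

theorem and_notMem_cov_iff (hab : a ≤ b + 1) :
    IsIntervalList a (b + 1) N l ∧ b ∉ cov l ↔ IsIntervalList (b + 1) (b + 1) N l := by
  constructor
  · rintro ⟨hl, hb⟩
    refine ⟨fun p hp => ?_, hl.pairwise⟩
    have := hl.bounds p hp
    have : ¬p.1 - p.2 ≤ b := fun hpb => hb (mem_cov.2 ⟨p, hp, hpb, by omega⟩)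
    omega
  · refine fun hl => ⟨⟨fun p hp => ?_, hl.pairwise⟩, fun hb => ?_⟩
    · have := hl.bounds p hp
      omega
    · simpa using hl.cov_subset hb

end IsIntervalList

/-- The finset of the lists satisfying `IsIntervalList a b (b + u)`, built by deciding whether the
first interval ends at `b`. -/
def intervalLists : ℕ → ℕ → ℕ → Finset (List (ℕ × ℕ))
  | _, _, 0 => {[]}
  | a, b, u + 1 => intervalLists a (b + 1) u ∪
      (range (b + 1 - a)).biUnion fun k =>
        (intervalLists (b + 1 - k) (b + 1) u).image (List.cons (b, k))

theorem mem_intervalLists {a b u : ℕ} {l : List (ℕ × ℕ)} :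
    l ∈ intervalLists a b u ↔ IsIntervalList a b (b + u) l := by
  induction u generalizing a b l with
  | zero =>
    rcases l with _ | ⟨⟨i, k⟩, l⟩
    · simp [intervalLists, IsIntervalList.nil]
    · simp only [intervalLists, mem_singleton, reduceCtorEq, IsIntervalList.cons_iff, false_iff]
      omega
  | succ u ih =>
    have hrange (k : ℕ) : k < b + 1 - a ↔ a + k ≤ b := by omega
    rw [IsIntervalList.iff_add_one_or_exists_cons (by omega)]
    simp only [intervalLists, mem_union, mem_biUnion, mem_image, mem_range, hrange, ih,
      Nat.add_right_comm b 1 u, Nat.add_assoc b u 1]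

theorem sum_intervalLists_succ {M : Type*} [AddCommMonoid M] (f : List (ℕ × ℕ) → M) (a b u : ℕ) :
    ∑ l ∈ intervalLists a b (u + 1), f l = ∑ l ∈ intervalLists a (b + 1) u, f l +
      ∑ k ∈ range (b + 1 - a), ∑ l ∈ intervalLists (b + 1 - k) (b + 1) u, f ((b, k) :: l) := by
  rw [intervalLists, sum_union, sum_biUnion]
  · simp only [sum_image List.cons_injective.injOn]
  · refine fun k _ k' _ hne => disjoint_left.2 fun l hl hl' => hne ?_
    obtain ⟨_, -, rfl⟩ := mem_image.1 hl
    obtain ⟨_, -, h⟩ := mem_image.1 hl'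
    simp only [List.cons.injEq, Prod.mk.injEq] at h
    exact h.1.2.symm
  · refine disjoint_left.2 fun l hl hl' => ?_
    simp only [mem_biUnion, mem_image] at hl'
    obtain ⟨k, -, l', -, rfl⟩ := hl'
    have := (IsIntervalList.cons_iff.1 (mem_intervalLists.1 hl)).1
    omega

theorem filter_notMem_cov_intervalLists {a b : ℕ} (hab : a ≤ b + 1) (u : ℕ) :
    {l ∈ intervalLists a (b + 1) u | b ∉ cov l} = intervalLists (b + 1) (b + 1) u := by
  ext l
  simp only [mem_filter, mem_intervalLists, IsIntervalList.and_notMem_cov_iff hab]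

/-- The number of points of `[b, N)` missed by the intervals of `l`: the exponent of the
multiplicity with which `l` is counted. -/
def uncovered (b N : ℕ) (l : List (ℕ × ℕ)) : ℕ := #(Ico b N \ cov l)

theorem uncovered_cons (b k N : ℕ) (l : List (ℕ × ℕ)) :
    uncovered b N ((b, k) :: l) = uncovered (b + 1) N l := by
  have hsdiff : Ico b N \ Icc (b - k) b = Ico (b + 1) N := by
    ext x
    simp only [mem_sdiff, mem_Ico, mem_Icc]
    omega
  rw [uncovered, cov_cons, ← sup_eq_union, ← sdiff_sdiff, hsdiff, uncovered]

theorem uncovered_of_lt {b N : ℕ} (hb : b < N) (l : List (ℕ × ℕ)) :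
    uncovered b N l = uncovered (b + 1) N l + if b ∈ cov l then 0 else 1 := by
  rw [uncovered, ← insert_Ico_add_one_left_eq_Ico hb]
  split_ifs with h
  · rw [insert_sdiff_of_mem _ h, uncovered, add_zero]
  · rw [insert_sdiff_of_notMem _ h, card_insert_of_notMem (by simp), uncovered]

theorem uncovered_zero_add_wt {a b N : ℕ} {l : List (ℕ × ℕ)} (hl : IsIntervalList a b N l) :
    uncovered 0 N l + wt l = N := by
  have hsub : cov l ⊆ Ico 0 N := hl.cov_subset.trans (Ico_subset_Ico_left a.zero_le)
  rw [uncovered, wt, card_sdiff_add_card_eq_card hsub, Nat.card_Ico, Nat.sub_zero]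

theorem add_one_pow_uncovered {R : Type*} [CommSemiring R] (y : R) {b N : ℕ} (hb : b < N)
    (l : List (ℕ × ℕ)) :
    (y + 1) ^ uncovered b N l = (y + 1) ^ uncovered (b + 1) N l +
      if b ∉ cov l then y * (y + 1) ^ uncovered (b + 1) N l else 0 := by
  rw [uncovered_of_lt hb]
  split_ifs <;> ring

theorem sum_pow_uncovered_succ {R : Type*} [CommSemiring R] (y : R) {a b N u : ℕ} (hb : b < N)
    (hab : a ≤ b + 1) :
    ∑ l ∈ intervalLists a b (u + 1), (y + 1) ^ uncovered b N l =
      ∑ l ∈ intervalLists a (b + 1) u, (y + 1) ^ uncovered (b + 1) N l +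
      y * ∑ l ∈ intervalLists (b + 1) (b + 1) u, (y + 1) ^ uncovered (b + 1) N l +
      ∑ k ∈ range (b + 1 - a),
        ∑ l ∈ intervalLists (b + 1 - k) (b + 1) u, (y + 1) ^ uncovered (b + 1) N l := by
  rw [sum_intervalLists_succ]
  simp only [uncovered_cons, add_one_pow_uncovered y hb, sum_add_distrib, ← sum_filter,
    filter_notMem_cov_intervalLists hab, mul_sum]

theorem sum_two_pow_uncovered {a b d : ℕ} (h : a + d = b + 1) (u : ℕ) :
    ∑ l ∈ intervalLists a b u, 2 ^ uncovered b (b + u) l = (2 * u + d).choose u := by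
  induction u generalizing a b d with
  | zero => simp [intervalLists, uncovered]
  | succ u ih =>
    have hrec := sum_pow_uncovered_succ (1 : ℕ) (a := a) (b := b) (N := b + 1 + u) (u := u)
      (by omega) (by omega)
    have hsum : ∑ k ∈ range d,
        ∑ l ∈ intervalLists (b + 1 - k) (b + 1) u, 2 ^ uncovered (b + 1) (b + 1 + u) l =
          ∑ k ∈ range d, (2 * u + (k + 1)).choose u :=
      sum_congr rfl fun k hk => ih (by have := mem_range.1 hk; omega)
    rw [one_add_one_eq_two, one_mul, ih (d := d + 1) (by omega), ih rfl,
      show b + 1 - a = d by omega, hsum] at hrec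
    rw [show b + (u + 1) = b + 1 + u by omega, hrec, choose_two_mul_succ_add, sum_range_succ]
    ring

theorem Z_eq_card_filter (n m : ℕ) : Z n m = #{l ∈ intervalLists 1 0 n | wt l = m} := by
  rw [Z, ← Nat.card_eq_finsetCard]
  refine Nat.card_congr (Equiv.subtypeEquivRight fun l => ?_)
  rw [mem_filter, mem_intervalLists, zero_add, isTT_iff_isIntervalList]

theorem sum_pow_mul_Z {R : Type*} [CommSemiring R] (x : R) {n : ℕ} (hn : 1 ≤ n) :
    ∑ m ∈ range n, x ^ (n - m) * (Z n m : R) =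
      ∑ l ∈ intervalLists 1 0 n, x ^ uncovered 0 n l := by
  have hlist {l} (hl : l ∈ intervalLists 1 0 n) : IsIntervalList 1 0 n l := by
    simpa using mem_intervalLists.1 hl
  have hwt : ∀ l ∈ intervalLists 1 0 n, wt l ∈ range n := fun l hl => by
    have : wt l ≤ n - 1 := (card_le_card (hlist hl).cov_subset).trans_eq (Nat.card_Ico 1 n)
    rw [mem_range]
    omega
  rw [← sum_fiberwise_of_maps_to hwt]
  refine sum_congr rfl fun m _ => ?_
  have hpow : ∀ l ∈ intervalLists 1 0 n, wt l = m → x ^ uncovered 0 n l = x ^ (n - m) := by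
    rintro l hl rfl
    rw [← Nat.eq_sub_of_add_eq (uncovered_zero_add_wt (hlist hl))]
  rw [sum_congr rfl fun l hl => hpow l (mem_filter.1 hl).1 (mem_filter.1 hl).2, sum_const,
    Z_eq_card_filter, nsmul_eq_mul, mul_comm]

theorem stmt8 (n : ℕ) (hn : 1 ≤ n) :
    ∑ m ∈ Finset.range n, 2 ^ (n - m) * Z n m = (n + 1) * catalan n := by
  calc ∑ m ∈ range n, 2 ^ (n - m) * Z n m
      = ∑ l ∈ intervalLists 1 0 n, 2 ^ uncovered 0 n l := sum_pow_mul_Z 2 hn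
    _ = (2 * n).choose n := by simpa using sum_two_pow_uncovered (a := 1) (b := 0) (d := 0) rfl n
    _ = (n + 1) * catalan n := by
        rw [succ_mul_catalan_eq_centralBinom, Nat.centralBinom_eq_two_mul_choose]
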